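/- Assume 𝔟 = 𝔡. Then a set A ⊆ [ω]^ω is bounded if and only if A is ≤_U-bounded for every free ultrafilter U on ℕ. -/

import Mathlib

open Cardinal

/-- `a ≤* b`: the set `[a ≤ b]` is cofinite. -/
def LeStar (a b : ℕ → ℕ) : Prop := {n | ¬ a n ≤ b n}.Finite

/-- `a ≤^∞ b`: the set `[a ≤ b]` is infinite. -/
def LeInf (a b : ℕ → ℕ) : Prop := {n | a n ≤ b n}.Infinite

/-- `a ≤_U b`: the set `[a ≤ b]` belongs to the ultrafilter `U`. -/
def LeU (U : Ultrafilter ℕ) (a b : ℕ → ℕ) : Prop := {n | a n ≤ b n} ∈ U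

/-- An ultrafilter is free if it extends the cofinite filter. -/
def Free (U : Ultrafilter ℕ) : Prop := (U : Filter ℕ) ≤ Filter.cofinite

/-- Elements of `[ω]^ω`, identified with their increasing enumerations. -/
abbrev IncSeq : Type := {f : ℕ → ℕ // StrictMono f}

/-- A subset of `[ω]^ω` is bounded if some element of `[ω]^ω` `≤*`-dominates it. -/
def Bounded (A : Set IncSeq) : Prop := ∃ b : IncSeq, ∀ a ∈ A, LeStar a.1 b.1

/-- A subset of `[ω]^ω` is dominating if it `≤*`-dominates every element of `[ω]^ω`. -/
def Dominating (D : Set IncSeq) : Prop := ∀ a : IncSeq, ∃ d ∈ D, LeStar a.1 d.1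

/-- A subset of `[ω]^ω` is `≤_U`-bounded if some element of `[ω]^ω` `≤_U`-dominates it. -/
def UBounded (U : Ultrafilter ℕ) (A : Set IncSeq) : Prop := ∃ b : IncSeq, ∀ a ∈ A, LeU U a.1 b.1

/-- `𝔟`: the least cardinality of an unbounded subset of `[ω]^ω`. -/
noncomputable def frakB : Cardinal := sInf {c | ∃ A : Set IncSeq, ¬ Bounded A ∧ c = #A}

/-- `𝔡`: the least cardinality of a dominating subset of `[ω]^ω`. -/
noncomputable def frakD : Cardinal := sInf {c | ∃ D : Set IncSeq, Dominating D ∧ c = #D}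

/-- `𝔟(U)`: the least cardinality of a `≤_U`-unbounded subset of `[ω]^ω`. -/
noncomputable def frakBU (U : Ultrafilter ℕ) : Cardinal :=
  sInf {c | ∃ A : Set IncSeq, ¬ UBounded U A ∧ c = #A}

/-- A set `A ⊆ [ω]^ω` is `𝔡`-unbounded if `|A| ≥ 𝔡` and every bounded subset of `A`
has cardinality less than `𝔡`. -/
def DUnbounded (A : Set IncSeq) : Prop :=
  frakD ≤ #A ∧ ∀ B ⊆ A, Bounded B → #B < frakD

/-! Let `A` be unbounded and let `D` be a dominating set of size `𝔟 = 𝔡`. By recursion along a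
well-order of `D` of type `𝔟`, choose `a_d ∈ A` so that the sets `[d < a_d]` have infinite finite
intersections: at each stage fewer than `𝔟` infinite sets have to be met, and an unbounded set has
a member exceeding `d` infinitely often on each of them. A free ultrafilter `U` containing all
these sets has no `d ∈ D` as a `≤_U`-bound of `A`, hence no bound at all, because `D` is
dominating. -/

theorem LeStar.leU {a b : ℕ → ℕ} (hab : LeStar a b) {U : Ultrafilter ℕ} (hU : Free U) :
    LeU U a b :=
  hU (Filter.mem_cofinite.2 hab)

theorem LeU.trans {U : Ultrafilter ℕ} {a b c : ℕ → ℕ} (hab : LeU U a b) (hbc : LeU U b c) :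
    LeU U a c :=
  Filter.EventuallyLE.trans hab hbc

theorem not_leU_iff {U : Ultrafilter ℕ} {a b : ℕ → ℕ} : ¬ LeU U a b ↔ {n | b n < a n} ∈ U := by
  simp only [LeU, ← Ultrafilter.compl_mem_iff_notMem, Set.compl_ofPred, not_le]

theorem Bounded.uBounded {A : Set IncSeq} (hA : Bounded A) {U : Ultrafilter ℕ} (hU : Free U) :
    UBounded U A := by
  obtain ⟨b, hb⟩ := hA
  exact ⟨b, fun a ha => (hb a ha).leU hU⟩

theorem bounded_of_finite {A : Set IncSeq} (hA : A.Finite) : Bounded A := by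
  refine ⟨⟨fun n => ∑ a ∈ hA.toFinset, a.1 n + n, fun m n hmn => ?_⟩, fun a ha => ?_⟩
  · exact add_lt_add_of_le_of_lt (Finset.sum_le_sum fun a _ => a.2.monotone hmn.le) hmn
  · refine Filter.mem_cofinite.1 (Filter.univ_mem' fun n => ?_)
    exact (Finset.single_le_sum (f := fun a : IncSeq => a.1 n) (fun _ _ => Nat.zero_le _)
      (hA.mem_toFinset.2 ha)).trans (Nat.le_add_right _ n)

theorem not_bounded_univ : ¬ Bounded Set.univ := by
  rintro ⟨b, hb⟩
  have hfin : LeStar (fun n => b.1 n + 1) b.1 := hb ⟨_, b.2.add_const 1⟩ trivial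
  exact Set.infinite_univ (hfin.subset fun n _ => Nat.not_succ_le_self (b.1 n))

theorem bounded_of_mk_lt_frakB {A : Set IncSeq} (hA : #A < frakB) : Bounded A := by
  by_contra h
  exact hA.not_ge (csInf_le' ⟨A, h, rfl⟩)

theorem aleph0_le_frakB : ℵ₀ ≤ frakB := by
  refine le_csInf ⟨_, Set.univ, not_bounded_univ, rfl⟩ ?_
  rintro _ ⟨A, hA, rfl⟩
  by_contra! h
  exact hA (bounded_of_finite (lt_aleph0_iff_set_finite.1 h))

theorem exists_dominating_mk_eq_frakD : ∃ D : Set IncSeq, Dominating D ∧ #D = frakD := by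
  obtain ⟨D, hD, hcard⟩ : frakD ∈ {c | ∃ D : Set IncSeq, Dominating D ∧ c = #D} :=
    csInf_mem ⟨_, Set.univ, fun a => ⟨a, trivial, by simp [LeStar]⟩, rfl⟩
  exact ⟨D, hD, hcard.symm⟩

theorem exists_mem_forall_infinite_inter_setOf_lt {A : Set IncSeq} (hA : ¬ Bounded A)
    (d : IncSeq) {𝒮 : Set (Set ℕ)} (h𝒮 : #𝒮 < frakB) (hinf : ∀ S ∈ 𝒮, S.Infinite) :
    ∃ a ∈ A, ∀ S ∈ 𝒮, (S ∩ {n | d.1 n < a.1 n}).Infinite := by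
  -- Fewer than `𝔟` reindexings `d ∘ S`, with `S` read as its enumeration, have a common bound `b`.
  -- Any `a ∈ A` not below `b` works, since `a` is increasing and `S n ≥ n`.
  have hmono (S : 𝒮) : StrictMono (Nat.nth (· ∈ S.1)) := Nat.nth_strictMono (hinf S S.2)
  let g (S : 𝒮) : IncSeq := ⟨d.1 ∘ Nat.nth (· ∈ S.1), d.2.comp (hmono S)⟩
  obtain ⟨b, hb⟩ : Bounded (Set.range g) := bounded_of_mk_lt_frakB (mk_range_le.trans_lt h𝒮)
  obtain ⟨a, haA, hab⟩ : ∃ a ∈ A, ¬ LeStar a.1 b.1 := by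
    by_contra! h
    exact hA ⟨b, h⟩
  refine ⟨a, haA, fun S hS => ?_⟩
  have hgb : {n | ¬ (g ⟨S, hS⟩).1 n ≤ b.1 n}.Finite := hb _ ⟨⟨S, hS⟩, rfl⟩
  have hlarge : ({n | ¬ a.1 n ≤ b.1 n} \ {n | ¬ (g ⟨S, hS⟩).1 n ≤ b.1 n}).Infinite :=
    Set.Infinite.sdiff hab hgb
  refine (hlarge.image (hmono ⟨S, hS⟩).injective.injOn).mono ?_
  rintro _ ⟨n, ⟨hban, hgbn⟩, rfl⟩
  refine ⟨Nat.nth_mem_of_infinite (hinf S hS) n, ?_⟩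
  calc d.1 (Nat.nth (· ∈ S) n)
      ≤ b.1 n := not_not.1 hgbn
    _ < a.1 n := not_le.1 hban
    _ ≤ a.1 (Nat.nth (· ∈ S) n) := a.2.monotone (hmono ⟨S, hS⟩).le_apply

/-- The strong finite intersection property: all finite intersections of the family `S` are
infinite, which is what makes `S` extend to a free ultrafilter. -/
def StrongFIP {ι α : Type*} (S : ι → Set α) : Prop :=
  ∀ F : Finset ι, (⋂ i ∈ F, S i).Infinite

theorem StrongFIP.exists_free {ι : Type*} {S : ι → Set ℕ} (hS : StrongFIP S) :
    ∃ U : Ultrafilter ℕ, Free U ∧ ∀ i, S i ∈ U := by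
  have : (Filter.cofinite ⊓ ⨅ i, Filter.principal (S i)).NeBot := by
    refine (Filter.hasBasis_cofinite.inf_basis_neBot_iff
      (Filter.hasBasis_iInf_principal_finite S)).2 fun {T} hT {F} hF => ?_
    lift F to Finset ι using hF
    exact ((hS F).sdiff hT).nonempty.mono fun n hn => ⟨hn.2, hn.1⟩
  obtain ⟨U, hU⟩ := Ultrafilter.exists_le (Filter.cofinite ⊓ ⨅ i, Filter.principal (S i))
  exact ⟨U, hU.trans inf_le_left, fun i =>
    Filter.le_principal_iff.1 (hU.trans (inf_le_right.trans (iInf_le _ i)))⟩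

theorem StrongFIP.of_forall_finset_Iio {ι α : Type*} [LinearOrder ι] [Infinite α]
    {S : ι → Set α}
    (hS : ∀ i, ∀ F : Finset (Set.Iio i), (⋂ j ∈ F, S j).Infinite →
      ((⋂ j ∈ F, S j) ∩ S i).Infinite) :
    StrongFIP S := by
  intro F
  induction F using Finset.induction_on_max with
  | empty => simpa using Set.infinite_univ
  | insert i F hF ih =>
    have hsub : ⋂ j ∈ F.subtype (· ∈ Set.Iio i), S j = ⋂ j ∈ F, S j := by
      ext x
      simp only [Set.mem_iInter, Finset.mem_subtype, Subtype.forall]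
      exact ⟨fun h j hj => h j (hF j hj) hj, fun h j _ hj => h j hj⟩
    rw [Finset.set_biInter_insert, Set.inter_comm, ← hsub]
    exact hS i _ (hsub ▸ ih)

theorem exists_forall_of_forall_Iio {ι α : Type*} [Preorder ι] [WellFoundedLT ι]
    {P : (i : ι) → (Set.Iio i → α) → α → Prop} (h : ∀ i f, ∃ x, P i f x) :
    ∃ a : ι → α, ∀ i, P i (fun j => a j) (a i) := by
  choose c hc using h
  let a : ι → α := wellFounded_lt.fix fun i f => c i fun j => f j j.2
  have ha (i : ι) : a i = c i fun j => a j := WellFounded.fix_eq _ _ i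
  exact ⟨a, fun i => ha i ▸ hc i _⟩

theorem mk_finset_lt_of_mk_lt {α : Type*} {κ : Cardinal} (hκ : ℵ₀ ≤ κ) (hα : #α < κ) :
    #(Finset α) < κ := by
  cases finite_or_infinite α
  · exact (lt_aleph0_of_finite _).trans_le hκ
  · rwa [mk_finset_of_infinite]

universe u

theorem exists_strongFIP {ι α : Type u} [LinearOrder ι] [WellFoundedLT ι] [Infinite α]
    {κ : Cardinal} (hκ : ℵ₀ ≤ κ) (hι : ∀ i : ι, #(Set.Iio i) < κ) {𝒳 : ι → Set (Set α)}
    (h𝒳 : ∀ i, ∀ 𝒮 : Set (Set α), #𝒮 < κ → (∀ S ∈ 𝒮, S.Infinite) →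
      ∃ X ∈ 𝒳 i, ∀ S ∈ 𝒮, (S ∩ X).Infinite) :
    ∃ X : ι → Set α, (∀ i, X i ∈ 𝒳 i) ∧ StrongFIP X := by
  have hstep (i : ι) (f : Set.Iio i → Set α) : ∃ X, X ∈ 𝒳 i ∧ ∀ F : Finset (Set.Iio i),
      (⋂ j ∈ F, f j).Infinite → ((⋂ j ∈ F, f j) ∩ X).Infinite := by
    let inter (F : Finset (Set.Iio i)) : Set α := ⋂ j ∈ F, f j
    have hcard : #{S ∈ Set.range inter | S.Infinite} < κ :=
      ((mk_le_mk_of_subset (Set.sep_subset _ _)).trans mk_range_le).trans_lt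
        (mk_finset_lt_of_mk_lt hκ (hι i))
    obtain ⟨X, hX, hinf⟩ := h𝒳 i _ hcard fun S hS => hS.2
    exact ⟨X, hX, fun F hF => hinf _ ⟨⟨F, rfl⟩, hF⟩⟩
  obtain ⟨X, hX⟩ := exists_forall_of_forall_Iio hstep
  exact ⟨X, fun i => (hX i).1, .of_forall_finset_Iio fun i => (hX i).2⟩

theorem exists_free_forall_exists_not_leU {A D : Set IncSeq} (hA : ¬ Bounded A)
    (hD : #D ≤ frakB) :
    ∃ U : Ultrafilter ℕ, Free U ∧ ∀ d ∈ D, ∃ a ∈ A, ¬ LeU U a.1 d.1 := by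
  obtain ⟨e⟩ : Nonempty ((#D).ord.ToType ≃ D) := Cardinal.eq.1 (mk_ord_toType #D)
  have hIio (i : (#D).ord.ToType) : #(Set.Iio i) < frakB :=
    lt_of_lt_of_le (by simpa using mk_Iio_lt i (by simp)) hD
  obtain ⟨X, hX, hfip⟩ := exists_strongFIP aleph0_le_frakB hIio
    (𝒳 := fun i => (fun a : IncSeq => {n | (e i).1.1 n < a.1 n}) '' A) fun i 𝒮 h𝒮 hinf =>
      Set.exists_mem_image.2 (exists_mem_forall_infinite_inter_setOf_lt hA (e i).1 h𝒮 hinf)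
  obtain ⟨U, hU, hXU⟩ := hfip.exists_free
  refine ⟨U, hU, fun d hd => ?_⟩
  obtain ⟨a, haA, hXa⟩ := hX (e.symm ⟨d, hd⟩)
  have hlt : {n | d.1 n < a.1 n} ∈ U := by simpa [← hXa] using hXU (e.symm ⟨d, hd⟩)
  exact ⟨a, haA, not_leU_iff.2 hlt⟩

/-- assume `𝔟 = 𝔡`. Then `A ⊆ [ω]^ω` is bounded if and only if it is
`≤_U`-bounded for every free ultrafilter `U`. -/
theorem stmt19 (hbd : frakB = frakD) (A : Set IncSeq) :
    Bounded A ↔ ∀ U : Ultrafilter ℕ, Free U → UBounded U A := by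
  refine ⟨fun hA U hU => hA.uBounded hU, fun h => ?_⟩
  by_contra hA
  obtain ⟨D, hD, hcard⟩ := exists_dominating_mk_eq_frakD
  obtain ⟨U, hU, hAU⟩ := exists_free_forall_exists_not_leU hA (hcard.trans hbd.symm).le
  obtain ⟨b, hb⟩ := h U hU
  obtain ⟨d, hdD, hb_le_d⟩ := hD b
  obtain ⟨a, haA, had⟩ := hAU d hdD
  exact had ((hb a haA).trans (hb_le_d.leU hU))
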